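/- Let k, m be positive integers. The images in R(k,m) of the monomials x_1^{n_1}·x_2^{n_2}·…·x_k^{n_k} with 0 ≤ n_i ≤ m+k−i for each i = 1,…,k form a basis of R(k,m) as a vector space over ZMod 2. -/

import Mathlib

/-!
Order the exponents colexicographically, so that `x_0 < x_1 < ⋯` (0-indexed). The recursion
`h_{d+1}(x, l) = h_{d+1}(l) + x * h_d(x, l)` shows that `h_d(x_0, …, x_j)` is monic with leading
monomial `x_j ^ d`. The generators of `flagIdeal k m` are therefore monic polynomials `g_j` with
leading monomials `x_j ^ d_j`, where `d_j = m + k - j`.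

For such a family the products `g ^ a * x ^ e` with `e_j < d_j` have leading exponents
`d * a + e`, and by division with remainder each exponent occurs exactly once. Hence they form a
basis of the polynomial ring. The ideal generated by the `g_j` is spanned by the products with
`a ≠ 0`, so the products with `a = 0`, which are the monomials `x ^ e`, form a basis of the
quotient.
-/

open scoped TensorProduct

/-- Complete homogeneous symmetric polynomial of degree `d` in a list of elements
of a commutative (semi)ring: `h_d(l)`. -/
noncomputable def completeHomog {R : Type*} [CommSemiring R] : List R → ℕ → R
  | [], 0 => 1
  | [], _ + 1 => 0
  | x :: l, d => ∑ t ∈ Finset.range (d + 1), x ^ t * completeHomog l (d - t)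

/-- Elementary symmetric polynomial of degree `d` in a list of elements: `e_d(l)`. -/
noncomputable def elemSymm {R : Type*} [CommSemiring R] : List R → ℕ → R
  | _, 0 => 1
  | [], _ + 1 => 0
  | x :: l, d + 1 => elemSymm l (d + 1) + x * elemSymm l d

/-- The ideal of `(ZMod 2)[x_1, …, x_k]` generated by the complete homogeneous
symmetric polynomials `h_{m+i}(x_1, …, x_{k+1-i})` for `1 ≤ i ≤ k`. -/
noncomputable def flagIdeal (k m : ℕ) : Ideal (MvPolynomial (Fin k) (ZMod 2)) :=
  Ideal.span { p | ∃ i : ℕ, 1 ≤ i ∧ i ≤ k ∧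
    p = completeHomog (((List.finRange k).take (k + 1 - i)).map MvPolynomial.X) (m + i) }

/-- `R(k,m)`, the quotient of `(ZMod 2)[x_1, …, x_k]` by `flagIdeal k m`;
this is the mod-2 cohomology ring of the real flag manifold `F(1^k, m)`. -/
abbrev FlagRing (k m : ℕ) : Type :=
  MvPolynomial (Fin k) (ZMod 2) ⧸ flagIdeal k m

/-- The image of the variable `x_{j+1}` in `R(k,m)` (`j` is 0-indexed). -/
noncomputable def xGen (k m : ℕ) (j : Fin k) : FlagRing k m :=
  Ideal.Quotient.mk (flagIdeal k m) (MvPolynomial.X j)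

/-- The zero-divisor `z_{j+1} = x_{j+1} ⊗ 1 + 1 ⊗ x_{j+1}` in `R(k,m) ⊗ R(k,m)`. -/
noncomputable def zGen (k m : ℕ) (j : Fin k) :
    FlagRing k m ⊗[ZMod 2] FlagRing k m :=
  xGen k m j ⊗ₜ 1 + 1 ⊗ₜ xGen k m j

/-- `x_{i+1,j+1}` in the `s`-fold tensor power `R(k,m)^{⊗ s}`: the element having
`x_{j+1}` in the `(i+1)`-st tensor factor and `1` elsewhere (`i`, `j` 0-indexed). -/
noncomputable def xT (k m s : ℕ) (i : Fin s) (j : Fin k) :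
    ⨂[ZMod 2] _ : Fin s, FlagRing k m :=
  PiTensorProduct.tprod (ZMod 2) (fun t => if t = i then xGen k m j else 1)

/-- The `s`-th zero-divisor `z_{i+1,j+1} = x_{1,j+1} + x_{i+1,j+1}` in `R(k,m)^{⊗ s}`. -/
noncomputable def zT (k m s : ℕ) (hs : 0 < s) (i : Fin s) (j : Fin k) :
    ⨂[ZMod 2] _ : Fin s, FlagRing k m :=
  xT k m s ⟨0, hs⟩ j + xT k m s i j

section Expansion

open MvPolynomial
open scoped MonomialOrder Pointwise

variable {σ ι R : Type*} [CommRing R] {m : MonomialOrder σ}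

theorem linearIndependent_of_injective_degree {v : ι → MvPolynomial σ R}
    (hlc : ∀ i, m.leadingCoeff (v i) ∈ nonZeroDivisors R)
    (hdeg : Function.Injective fun i => m.degree (v i)) : LinearIndependent R v := by
  rw [linearIndependent_iff]
  intro c hc
  by_contra hne
  obtain ⟨i, hi, hmax⟩ := c.support.exists_max_image (fun i => m.toSyn (m.degree (v i)))
    (Finsupp.support_nonempty_iff.2 hne)
  have hlower : ∀ j ∈ c.support, j ≠ i → coeff (m.degree (v i)) (c j • v j) = 0 := by
    intro j hj hji
    have hlt : m.degree (v j) ≺[m] m.degree (v i) :=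
      (hmax j hj).lt_of_ne fun h => hji (hdeg (m.toSyn.injective h))
    rw [coeff_smul, m.coeff_eq_zero_of_lt hlt, smul_zero]
  have hcoeff : c i * m.leadingCoeff (v i) = 0 := by
    have h := congrArg (coeff (m.degree (v i))) hc
    rw [Finsupp.linearCombination_apply, Finsupp.sum, coeff_sum,
      Finset.sum_eq_single_of_mem i hi hlower, coeff_smul, coeff_zero] at h
    exact h
  exact Finsupp.mem_support_iff.1 hi ((mul_right_mem_nonZeroDivisors_eq_zero_iff (hlc i)).1 hcoeff)

theorem span_eq_top_of_surjective_degree {v : ι → MvPolynomial σ R}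
    (hlc : ∀ i, IsUnit (m.leadingCoeff (v i)))
    (hdeg : Function.Surjective fun i => m.degree (v i)) :
    Submodule.span R (Set.range v) = ⊤ := by
  cases subsingleton_or_nontrivial R
  · exact Subsingleton.elim _ _
  classical
  set W := Submodule.span R (Set.range v)
  have hmonomial : ∀ a : m.syn, monomial (m.toSyn.symm a) (1 : R) ∈ W := by
    intro a
    induction a using WellFoundedLT.induction with | _ a ih
    obtain ⟨i, hi⟩ := hdeg (m.toSyn.symm a)
    have hlower : ∑ b ∈ (v i).support.erase (m.degree (v i)), monomial b (coeff b (v i)) ∈ W := by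
      refine W.sum_mem fun b hb => ?_
      obtain ⟨hne, hb⟩ := Finset.mem_erase.1 hb
      have hlt : m.toSyn b < a := by
        rw [← m.toSyn.apply_symm_apply a, ← hi]
        exact (m.le_degree hb).lt_of_ne fun h => hne (m.toSyn.injective h)
      have hb' := W.smul_mem (coeff b (v i)) (ih _ hlt)
      rwa [m.toSyn.symm_apply_apply, smul_monomial, smul_eq_mul, mul_one] at hb'
    have hsplit : m.leadingCoeff (v i) • monomial (m.toSyn.symm a) (1 : R) +
        ∑ b ∈ (v i).support.erase (m.degree (v i)), monomial b (coeff b (v i)) = v i := by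
      rw [← hi, smul_monomial, smul_eq_mul, mul_one]
      exact (Finset.add_sum_erase _ _ (m.degree_mem_support
        (m.leadingCoeff_ne_zero_iff.1 (hlc i).ne_zero))).trans (v i).support_sum_monomial_coeff
    rw [← W.smul_mem_iff_of_isUnit (hlc i), ← W.add_mem_iff_left hlower, hsplit]
    exact Submodule.subset_span ⟨i, rfl⟩
  rw [eq_top_iff, ← (basisMonomials σ R).span_eq, Submodule.span_le]
  rintro _ ⟨b, rfl⟩
  simpa using hmonomial (m.toSyn b)

/-- Exponents `e` whose monomial `X ^ e` is divisible by none of the pure powers `X j ^ d j`. -/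
abbrev ReducedExponent (d : σ → ℕ) : Type _ :=
  {e : σ →₀ ℕ // ∀ j, e j < d j}

/-- The product `g ^ a * X ^ e`, a term in the expansion of a polynomial in powers of `g`. It is
used when `X j ^ d j` is the leading monomial of `g j`, so that the `e` are the exponents left over
by division by `g`. -/
noncomputable def adicMonomial (g : σ → MvPolynomial σ R) (d : σ → ℕ)
    (p : (σ →₀ ℕ) × ReducedExponent d) : MvPolynomial σ R :=
  p.1.prod (fun j n => g j ^ n) * monomial p.2.1 1

lemma adicMonomial_zero (g : σ → MvPolynomial σ R) {d : σ → ℕ} (e : ReducedExponent d) :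
    adicMonomial g d (0, e) = monomial e.1 1 := by
  rw [adicMonomial, Finsupp.prod_zero_index, one_mul]

lemma adicMonomial_add_single (g : σ → MvPolynomial σ R) {d : σ → ℕ} (a : σ →₀ ℕ)
    (e : ReducedExponent d) (j : σ) :
    adicMonomial g d (a + Finsupp.single j 1, e) = adicMonomial g d (a, e) * g j := by
  classical
  rw [adicMonomial, Finsupp.prod_add_index' (h := fun j n => g j ^ n)
    (fun j => pow_zero (g j)) (fun j => pow_add (g j)),
    Finsupp.prod_single_index (h := fun j n => g j ^ n) (pow_zero (g j)), pow_one,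
    mul_right_comm, adicMonomial]

lemma range_adicMonomial_smul_range (g : σ → MvPolynomial σ R) (d : σ → ℕ) :
    Set.range (adicMonomial g d) • Set.range g = adicMonomial g d '' {p | p.1 ≠ 0} := by
  apply subset_antisymm
  · rintro _ ⟨_, ⟨⟨a, e⟩, rfl⟩, _, ⟨j, rfl⟩, rfl⟩
    refine ⟨(a + Finsupp.single j 1, e), fun h => ?_, adicMonomial_add_single g a e j⟩
    simpa using DFunLike.congr_fun h j
  · rintro _ ⟨⟨a, e⟩, ha, rfl⟩
    obtain ⟨j, hj⟩ := Finsupp.ne_iff.1 ha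
    have hsub : a - Finsupp.single j 1 + Finsupp.single j 1 = a :=
      tsub_add_cancel_of_le (Finsupp.single_le_iff.2 (Nat.one_le_iff_ne_zero.2 hj))
    rw [← hsub, adicMonomial_add_single]
    exact Set.smul_mem_smul ⟨_, rfl⟩ ⟨j, rfl⟩

lemma span_image_adicMonomial_eq_ker {g : σ → MvPolynomial σ R} {d : σ → ℕ}
    (hspan : Submodule.span R (Set.range (adicMonomial g d)) = ⊤) :
    Submodule.span R (adicMonomial g d '' {p | p.1 ≠ 0}) =
      LinearMap.ker (Ideal.Quotient.mkₐ R (Ideal.span (Set.range g))).toLinearMap := by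
  rw [← range_adicMonomial_smul_range, Submodule.span_smul_of_span_eq_top hspan]
  ext f
  exact Ideal.Quotient.eq_zero_iff_mem.symm

variable [Nontrivial R] {g : σ → MvPolynomial σ R} {d : σ → ℕ}

lemma leadingCoeff_finsuppProd_pow (hlc : ∀ j, IsUnit (m.leadingCoeff (g j))) (a : σ →₀ ℕ) :
    m.leadingCoeff (a.prod fun j n => g j ^ n) = a.prod fun j n => m.leadingCoeff (g j) ^ n := by
  have hpow : ∀ j, m.leadingCoeff (g j ^ a j) = m.leadingCoeff (g j) ^ a j := fun j =>
    m.leadingCoeff_pow_of_pow_leadingCoeff_ne_zero ((hlc j).pow (a j)).ne_zero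
  rw [Finsupp.prod, m.leadingCoeff_prod_of_regular fun j _ =>
    hpow j ▸ ((hlc j).pow (a j)).isRegular]
  exact Finset.prod_congr rfl fun j _ => hpow j

lemma isUnit_leadingCoeff_finsuppProd_pow (hlc : ∀ j, IsUnit (m.leadingCoeff (g j)))
    (a : σ →₀ ℕ) : IsUnit (m.leadingCoeff (a.prod fun j n => g j ^ n)) := by
  rw [leadingCoeff_finsuppProd_pow hlc]
  exact IsUnit.prod_iff.2 fun j _ => (hlc j).pow (a j)

lemma degree_finsuppProd_pow (hlc : ∀ j, IsUnit (m.leadingCoeff (g j))) (a : σ →₀ ℕ) :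
    m.degree (a.prod fun j n => g j ^ n) = a.sum fun j n => n • m.degree (g j) := by
  have hpow : ∀ j, IsUnit (m.leadingCoeff (g j) ^ a j) := fun j => (hlc j).pow (a j)
  rw [Finsupp.prod, m.degree_prod_of_regular]
  · exact Finset.sum_congr rfl fun j _ =>
      m.degree_pow_of_pow_leadingCoeff_ne_zero (hpow j).ne_zero
  · intro j _
    rw [m.leadingCoeff_pow_of_pow_leadingCoeff_ne_zero (hpow j).ne_zero]
    exact (hpow j).isRegular

lemma isUnit_leadingCoeff_adicMonomial (hlc : ∀ j, IsUnit (m.leadingCoeff (g j)))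
    (p : (σ →₀ ℕ) × ReducedExponent d) : IsUnit (m.leadingCoeff (adicMonomial g d p)) := by
  rw [adicMonomial, m.leadingCoeff_mul_of_left_mem_nonZeroDivisors
    (isUnit_leadingCoeff_finsuppProd_pow hlc p.1).mem_nonZeroDivisors, m.leadingCoeff_monomial,
    mul_one]
  exact isUnit_leadingCoeff_finsuppProd_pow hlc p.1

lemma degree_adicMonomial_apply (hlc : ∀ j, IsUnit (m.leadingCoeff (g j)))
    (hdeg : ∀ j, m.degree (g j) = Finsupp.single j (d j)) (p : (σ →₀ ℕ) × ReducedExponent d)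
    (i : σ) : m.degree (adicMonomial g d p) i = d i * p.1 i + p.2.1 i := by
  classical
  rw [adicMonomial, m.degree_mul_of_left_mem_nonZeroDivisors
    (isUnit_leadingCoeff_finsuppProd_pow hlc p.1).mem_nonZeroDivisors (by simp),
    degree_finsuppProd_pow hlc, m.degree_monomial, if_neg one_ne_zero, Finsupp.add_apply,
    Finsupp.sum_apply]
  congr 1
  simp +contextual [hdeg, Finsupp.sum, Finsupp.single_apply, mul_comm]

lemma injective_degree_adicMonomial (hlc : ∀ j, IsUnit (m.leadingCoeff (g j)))
    (hdeg : ∀ j, m.degree (g j) = Finsupp.single j (d j)) :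
    Function.Injective fun p => m.degree (adicMonomial g d p) := by
  rintro ⟨a, e⟩ ⟨b, f⟩ h
  have heq : ∀ j, d j * a j + e.1 j = d j * b j + f.1 j := fun j => by
    simpa only [degree_adicMonomial_apply hlc hdeg] using DFunLike.congr_fun h j
  have hrem : ∀ j, e.1 j = f.1 j := fun j => by
    simpa only [Nat.mul_add_mod, Nat.mod_eq_of_lt (e.2 j), Nat.mod_eq_of_lt (f.2 j)] using
      congrArg (· % d j) (heq j)
  have hquot : ∀ j, a j = b j := fun j =>
    Nat.eq_of_mul_eq_mul_left (Nat.zero_lt_of_lt (e.2 j))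
      (Nat.add_right_cancel ((heq j).trans (by rw [hrem j])))
  exact Prod.ext (Finsupp.ext hquot) (Subtype.ext (Finsupp.ext hrem))

lemma surjective_degree_adicMonomial (hlc : ∀ j, IsUnit (m.leadingCoeff (g j)))
    (hdeg : ∀ j, m.degree (g j) = Finsupp.single j (d j)) (hd : ∀ j, 0 < d j) :
    Function.Surjective fun p => m.degree (adicMonomial g d p) := by
  intro c
  let quotient : σ →₀ ℕ := Finsupp.onFinset c.support (fun j => c j / d j) fun j hj =>
    Finsupp.mem_support_iff.2 fun hc => hj (by rw [hc, Nat.zero_div])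
  let remainder : σ →₀ ℕ := Finsupp.onFinset c.support (fun j => c j % d j) fun j hj =>
    Finsupp.mem_support_iff.2 fun hc => hj (by rw [hc, Nat.zero_mod])
  refine ⟨(quotient, ⟨remainder, fun j => Nat.mod_lt _ (hd j)⟩), Finsupp.ext fun j => ?_⟩
  rw [degree_adicMonomial_apply hlc hdeg]
  exact Nat.div_add_mod (c j) (d j)

theorem linearIndependent_adicMonomial (hlc : ∀ j, IsUnit (m.leadingCoeff (g j)))
    (hdeg : ∀ j, m.degree (g j) = Finsupp.single j (d j)) :
    LinearIndependent R (adicMonomial g d) :=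
  linearIndependent_of_injective_degree
    (fun p => (isUnit_leadingCoeff_adicMonomial hlc p).mem_nonZeroDivisors)
    (injective_degree_adicMonomial hlc hdeg)

theorem span_adicMonomial_eq_top (hlc : ∀ j, IsUnit (m.leadingCoeff (g j)))
    (hdeg : ∀ j, m.degree (g j) = Finsupp.single j (d j)) (hd : ∀ j, 0 < d j) :
    Submodule.span R (Set.range (adicMonomial g d)) = ⊤ :=
  span_eq_top_of_surjective_degree (isUnit_leadingCoeff_adicMonomial hlc)
    (surjective_degree_adicMonomial hlc hdeg hd)

theorem linearIndependent_mk_monomial (hlc : ∀ j, IsUnit (m.leadingCoeff (g j)))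
    (hdeg : ∀ j, m.degree (g j) = Finsupp.single j (d j)) (hd : ∀ j, 0 < d j) :
    LinearIndependent R fun e : ReducedExponent d =>
      Ideal.Quotient.mk (Ideal.span (Set.range g)) (monomial e.1 1) := by
  have hadic : LinearIndependent R (adicMonomial g d) := linearIndependent_adicMonomial hlc hdeg
  have hreduced : LinearIndependent R fun e : ReducedExponent d => monomial e.1 (1 : R) := by
    simpa only [Function.comp_def, adicMonomial_zero] using
      hadic.comp (fun e => (0, e)) (Prod.mk_right_injective 0)
  have hdisjoint := hadic.disjoint_span_image (s := Set.range (Prod.mk 0)) (t := {p | p.1 ≠ 0})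
    (Set.disjoint_left.2 fun _ ⟨_, hp⟩ hne => hne (hp ▸ rfl))
  rw [span_image_adicMonomial_eq_ker (span_adicMonomial_eq_top hlc hdeg hd), ← Set.range_comp]
    at hdisjoint
  simp only [Function.comp_def, adicMonomial_zero] at hdisjoint
  exact hreduced.map hdisjoint

theorem span_mk_monomial_eq_top (hlc : ∀ j, IsUnit (m.leadingCoeff (g j)))
    (hdeg : ∀ j, m.degree (g j) = Finsupp.single j (d j)) (hd : ∀ j, 0 < d j) :
    Submodule.span R (Set.range fun e : ReducedExponent d =>
      Ideal.Quotient.mk (Ideal.span (Set.range g)) (monomial e.1 1)) = ⊤ := by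
  have hspan := span_adicMonomial_eq_top hlc hdeg hd
  set φ := (Ideal.Quotient.mkₐ R (Ideal.span (Set.range g))).toLinearMap
  have hφ : LinearMap.range φ = ⊤ := LinearMap.range_eq_top.2 Ideal.Quotient.mk_surjective
  rw [eq_top_iff, ← hφ, ← Submodule.map_top, ← hspan, Submodule.map_span, Submodule.span_le]
  rintro _ ⟨_, ⟨⟨a, e⟩, rfl⟩, rfl⟩
  by_cases ha : a = 0
  · rw [ha, adicMonomial_zero]
    exact Submodule.subset_span ⟨e, rfl⟩
  · have hker : adicMonomial g d (a, e) ∈ LinearMap.ker φ := by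
      rw [← span_image_adicMonomial_eq_ker hspan]
      exact Submodule.subset_span ⟨(a, e), ha, rfl⟩
    rw [LinearMap.mem_ker.1 hker]
    exact zero_mem _

end Expansion

section CompleteHomog

open MvPolynomial
open scoped MonomialOrder

lemma completeHomog_zero {R : Type*} [CommSemiring R] (l : List R) : completeHomog l 0 = 1 := by
  induction l with
  | nil => rw [completeHomog]
  | cons x l ih => simp [completeHomog, ih]

lemma completeHomog_cons_succ {R : Type*} [CommSemiring R] (x : R) (l : List R) (d : ℕ) :
    completeHomog (x :: l) (d + 1) = completeHomog l (d + 1) + x * completeHomog (x :: l) d := by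
  rw [completeHomog, Finset.sum_range_succ', completeHomog, Finset.mul_sum, add_comm]
  simp [pow_succ', mul_assoc]

lemma completeHomog_singleton {R : Type*} [CommSemiring R] (x : R) (d : ℕ) :
    completeHomog [x] d = x ^ d := by
  induction d with
  | zero => rw [completeHomog_zero, pow_zero]
  | succ d ih => rw [completeHomog_cons_succ, completeHomog, zero_add, ih, pow_succ']

variable {σ R : Type*} [CommSemiring R] [Nontrivial R] {m : MonomialOrder σ}

lemma degree_completeHomog_and_monic {l : List σ} {i : σ}
    (hl : ∀ j ∈ l, Finsupp.single j 1 ≺[m] Finsupp.single i 1) (d : ℕ) :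
    m.degree (completeHomog ((l ++ [i]).map X) d : MvPolynomial σ R) = Finsupp.single i d ∧
      m.Monic (completeHomog ((l ++ [i]).map X) d : MvPolynomial σ R) := by
  classical
  induction l generalizing d with
  | nil =>
    rw [List.nil_append, List.map_singleton, completeHomog_singleton, X_pow_eq_monomial,
      m.degree_monomial, if_neg one_ne_zero]
    exact ⟨rfl, m.monic_monomial_one⟩
  | cons j l ih =>
    rw [List.forall_mem_cons] at hl
    rw [List.cons_append, List.map_cons]
    induction d with
    | zero =>
      rw [completeHomog_zero, m.degree_one, Finsupp.single_zero]
      exact ⟨rfl, m.monic_one⟩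
    | succ d ihd =>
      obtain ⟨hdeg, hmonic⟩ := ih hl.2 (d + 1)
      have hlt : m.degree (X j * completeHomog (X j :: (l ++ [i]).map X) d : MvPolynomial σ R)
          ≺[m] m.degree (completeHomog ((l ++ [i]).map X) (d + 1) : MvPolynomial σ R) := by
        calc m.toSyn (m.degree (X j * completeHomog (X j :: (l ++ [i]).map X) d))
            ≤ m.toSyn (Finsupp.single j 1 + Finsupp.single i d) := by
              rw [← ihd.1, ← m.degree_X (R := R)]
              exact m.degree_mul_le
          _ < m.toSyn (Finsupp.single i 1 + Finsupp.single i d) := by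
              rw [map_add, map_add]
              exact add_lt_add_left hl.1 _
          _ = m.toSyn (m.degree (completeHomog ((l ++ [i]).map X) (d + 1))) := by
            rw [hdeg, ← Finsupp.single_add, add_comm]
      rw [completeHomog_cons_succ]
      exact ⟨(m.degree_add_of_lt hlt).trans hdeg, hmonic.add_of_lt hlt⟩

end CompleteHomog

section FlagIdeal

open MvPolynomial
open scoped MonomialOrder

/-- The colexicographic order, in which variables with larger index are larger. -/
noncomputable def colexMonomialOrder (σ : Type*) [LinearOrder σ] [WellFoundedLT σ] :
    MonomialOrder σ where
  syn := Colex (σ →₀ ℕ)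
  toSyn := { toEquiv := toColex, map_add' := toColex_add }
  toSyn_monotone := Finsupp.toColex_monotone

/-- The ideal `flagIdeal k m` with `ZMod 2` replaced by an arbitrary coefficient ring. -/
noncomputable def flagIdealOver (R : Type*) [CommRing R] (k m : ℕ) :
    Ideal (MvPolynomial (Fin k) R) :=
  Ideal.span { p | ∃ i : ℕ, 1 ≤ i ∧ i ≤ k ∧
    p = completeHomog (((List.finRange k).take (k + 1 - i)).map X) (m + i) }

/-- The generator `h_{m+k-j}(x_0, …, x_j)` of `flagIdealOver R k m`, indexed by the last variable
`x_j` occurring in it. In the numbering of `flagIdeal`, it has `i = k - j`. -/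
noncomputable def flagRelation (R : Type*) [CommRing R] (k m : ℕ) (j : Fin k) :
    MvPolynomial (Fin k) R :=
  completeHomog (((List.finRange k).take (j + 1)).map X) (m + k - j)

lemma map_monomial_one_eq_prod {σ R S F : Type*} [Fintype σ] [CommSemiring R] [CommSemiring S]
    [FunLike F (MvPolynomial σ R) S] [RingHomClass F (MvPolynomial σ R) S] (φ : F) (e : σ →₀ ℕ) :
    φ (monomial e 1) = ∏ j, φ (X j) ^ e j := by
  rw [monomial_eq, C_1, one_mul, Finsupp.prod_fintype _ _ fun _ => pow_zero _, map_prod]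
  simp only [map_pow]

variable {R : Type*} [CommRing R] {k m : ℕ}

lemma flagIdealOver_eq_span_range :
    flagIdealOver R k m = Ideal.span (Set.range (flagRelation R k m)) := by
  rw [flagIdealOver]
  congr 1
  ext p
  constructor
  · rintro ⟨i, hi, hik, rfl⟩
    exact ⟨⟨k - i, by omega⟩, by
      rw [flagRelation, show k - i + 1 = k + 1 - i by omega, show m + k - (k - i) = m + i by omega]⟩
  · rintro ⟨j, rfl⟩
    exact ⟨k - j, by omega, by omega, by
      rw [flagRelation, show k + 1 - (k - j) = j + 1 by omega,
        show m + (k - j) = m + k - j by omega]⟩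

lemma degree_flagRelation_and_monic [Nontrivial R] (j : Fin k) :
    (colexMonomialOrder (Fin k)).degree (flagRelation R k m j) = Finsupp.single j (m + k - j) ∧
      (colexMonomialOrder (Fin k)).Monic (flagRelation R k m j) := by
  have hlast : (List.finRange k).take (j + 1) = (List.finRange k).take j ++ [j] := by
    simp [List.take_add_one]
  rw [flagRelation, hlast]
  apply degree_completeHomog_and_monic
  intro i hi
  obtain ⟨n, hn, rfl⟩ := List.mem_take_iff_getElem.1 hi
  apply Finsupp.Colex.single_strictMono
  rw [List.getElem_finRange, Fin.lt_def]
  exact hn.trans_le (min_le_left _ _)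

/-- The exponents reduced with respect to the leading monomials `X j ^ (m + k - j)` of the
`flagRelation`s, as plain functions. -/
noncomputable def reducedExponentEquiv (k m : ℕ) :
    ReducedExponent (fun j : Fin k => m + k - j) ≃
      {n : Fin k → ℕ // ∀ j : Fin k, n j + j.val < m + k} :=
  Finsupp.equivFunOnFinite.subtypeEquiv fun _ => forall_congr' fun _ => Nat.lt_sub_iff_add_lt

end FlagIdeal

theorem statement0_general (R : Type*) [CommRing R] (k m : ℕ) :
    LinearIndependent R
      (fun n : {n : Fin k → ℕ // ∀ j : Fin k, n j + j.val < m + k} =>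
        ∏ j : Fin k, Ideal.Quotient.mk (flagIdealOver R k m) (MvPolynomial.X j) ^ n.val j) ∧
    Submodule.span R
      (Set.range (fun n : {n : Fin k → ℕ // ∀ j : Fin k, n j + j.val < m + k} =>
        ∏ j : Fin k, Ideal.Quotient.mk (flagIdealOver R k m) (MvPolynomial.X j) ^ n.val j)) =
      ⊤ := by
  cases subsingleton_or_nontrivial R
  · have := Module.subsingleton R (MvPolynomial (Fin k) R ⧸ flagIdealOver R k m)
    exact ⟨linearIndependent_of_subsingleton, Subsingleton.elim _ _⟩
  choose hdeg hmonic using degree_flagRelation_and_monic (R := R) (k := k) (m := m)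
  have hlc : ∀ j, IsUnit ((colexMonomialOrder (Fin k)).leadingCoeff (flagRelation R k m j)) :=
    fun j => (hmonic j).leadingCoeff_eq_one ▸ isUnit_one
  have hpos : ∀ j : Fin k, 0 < m + k - j := fun j => by omega
  rw [flagIdealOver_eq_span_range, ← linearIndependent_equiv (reducedExponentEquiv k m),
    ← (reducedExponentEquiv k m).surjective.range_comp]
  have hind := linearIndependent_mk_monomial hlc hdeg hpos
  have hspan := span_mk_monomial_eq_top hlc hdeg hpos
  simp only [map_monomial_one_eq_prod] at hind hspan
  exact ⟨hind, hspan⟩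

/-- the images in `R(k,m)` of the monomials `x_1^{n_1} ⋯ x_k^{n_k}` with
`0 ≤ n_i ≤ m + k - i` form a `ZMod 2`-basis of `R(k,m)`: they are linearly independent
and span. (The bound `n_i ≤ m + k - i`, with `i` 1-indexed, reads `n j + j.val < m + k`
for the 0-indexed `j`.) -/
theorem statement0 (k m : ℕ) (hk : 0 < k) (hm : 0 < m) :
    LinearIndependent (ZMod 2)
      (fun n : {n : Fin k → ℕ // ∀ j : Fin k, n j + j.val < m + k} =>
        ∏ j : Fin k, xGen k m j ^ n.val j) ∧
    Submodule.span (ZMod 2)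
      (Set.range (fun n : {n : Fin k → ℕ // ∀ j : Fin k, n j + j.val < m + k} =>
        ∏ j : Fin k, xGen k m j ^ n.val j)) = ⊤ :=
  statement0_general (ZMod 2) k m
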